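/- For every ρ > 1 and every N > 1 there exist a complex Hilbert space X and an N-tuple A = (A₁,…,A_N) of bounded linear operators on X belonging to the class C_{ρ,N} such that A is not simultaneously similar to any N-tuple T = (T₁,…,T_N) belonging to the class C_{1,N}; that is, there is no complex Hilbert space Y, no T ∈ C_{1,N} of bounded operators on Y, and no boundedly invertible operator S : X → Y with A_k = S^{−1} T_k S for all k = 1,…,N. -/

import Mathlib

open ContinuousLinearMap

noncomputable section

/-- A continuous linear operator on a complex Hilbert space is unitary. -/
def IsUnitaryOp {Y : Type*} [NormedAddCommGroup Y] [InnerProductSpace ℂ Y] [CompleteSpace Y]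
    (T : Y →L[ℂ] Y) : Prop :=
  T ∘L adjoint T = 1 ∧ adjoint T ∘L T = 1

/-- A unitary `ρ`-dilation of an `N`-tuple of bounded operators on a complex Hilbert space `X`:
a complex Hilbert space `Y`, a linear isometry `ι : X → Y`, and an `N`-tuple `At` of operators
on `Y` such that every unimodular combination `ζ₁At₁ + ⋯ + ζ_N At_N` is unitary, and
`(z₁A₁ + ⋯ + z_N A_N)ⁿ = ρ · ι* ∘ (z₁At₁ + ⋯ + z_N At_N)ⁿ ∘ ι` for all `z ∈ ℂ^N` and `n ≥ 1`. -/
structure UnitaryRhoDilation (N : ℕ) (ρ : ℝ) (X : Type*) [NormedAddCommGroup X]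
    [InnerProductSpace ℂ X] [CompleteSpace X] (A : Fin N → X →L[ℂ] X) where
  Y : Type
  [instN : NormedAddCommGroup Y]
  [instI : InnerProductSpace ℂ Y]
  [instC : CompleteSpace Y]
  ι : X →L[ℂ] Y
  isom : Isometry ι
  At : Fin N → Y →L[ℂ] Y
  unit : ∀ ζ : Fin N → ℂ, (∀ k, ‖ζ k‖ = 1) → IsUnitaryOp (∑ k, ζ k • At k)
  dil : ∀ (z : Fin N → ℂ) (n : ℕ), 1 ≤ n →
    (∑ k, z k • A k) ^ n = (ρ : ℂ) • (adjoint ι ∘L (((∑ k, z k • At k) ^ n) ∘L ι))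

/-- The class `C_{ρ,N}`: `N`-tuples of bounded operators admitting a unitary `ρ`-dilation. -/
def MemC (N : ℕ) (ρ : ℝ) {X : Type*} [NormedAddCommGroup X] [InnerProductSpace ℂ X]
    [CompleteSpace X] (A : Fin N → X →L[ℂ] X) : Prop :=
  Nonempty (UnitaryRhoDilation N ρ X A)

/-- A witness for STATEMENT 8: a complex Hilbert space `X` together with an `N`-tuple
`A ∈ C_{ρ,N}` of operators on `X` which is not simultaneously similar to any `N`-tuple
`T ∈ C_{1,N}` of operators on any complex Hilbert space `Y`. -/
structure NonSimilarWitness (N : ℕ) (ρ : ℝ) where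
  X : Type
  [instN : NormedAddCommGroup X]
  [instI : InnerProductSpace ℂ X]
  [instC : CompleteSpace X]
  A : Fin N → X →L[ℂ] X
  mem : MemC N ρ A
  notSimilar : ∀ (Y : Type) [NormedAddCommGroup Y] [InnerProductSpace ℂ Y] [CompleteSpace Y]
    (T : Fin N → Y →L[ℂ] Y), MemC N 1 T → ∀ S : X ≃L[ℂ] Y,
    ¬ (∀ k, A k = (S.symm : Y →L[ℂ] X) ∘L (T k ∘L (S : X →L[ℂ] Y)))

theorem isUnitaryOp_of_norm_surj {Y : Type*} [NormedAddCommGroup Y] [InnerProductSpace ℂ Y]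
    [CompleteSpace Y] (T : Y →L[ℂ] Y) (h : ∀ x, ‖T x‖ = ‖x‖) (hs : Function.Surjective T) :
    IsUnitaryOp T := by
  have h1 : adjoint T ∘L T = 1 := (T.norm_map_iff_adjoint_comp_self).1 h
  refine ⟨?_, h1⟩
  ext y
  obtain ⟨x, rfl⟩ := hs y
  have := congrArg (fun F : Y →L[ℂ] Y => F x) h1
  simp only [ContinuousLinearMap.comp_apply, one_apply_eq_self] at this ⊢
  rw [this]

theorem IsUnitaryOp.norm_map {Y : Type*} [NormedAddCommGroup Y] [InnerProductSpace ℂ Y]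
    [CompleteSpace Y] {T : Y →L[ℂ] Y} (h : IsUnitaryOp T) (x : Y) : ‖T x‖ = ‖x‖ :=
  (T.norm_map_iff_adjoint_comp_self).2 h.2 x

theorem IsUnitaryOp.inner_map {Y : Type*} [NormedAddCommGroup Y] [InnerProductSpace ℂ Y]
    [CompleteSpace Y] {T : Y →L[ℂ] Y} (h : IsUnitaryOp T) (x y : Y) :
    inner ℂ (T x) (T y) = inner ℂ x y := by
  rw [← adjoint_inner_left]
  have := congrArg (fun F : Y →L[ℂ] Y => F x) h.2
  simp only [ContinuousLinearMap.comp_apply, one_apply_eq_self] at this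
  rw [this]

theorem IsUnitaryOp.surj {Y : Type*} [NormedAddCommGroup Y] [InnerProductSpace ℂ Y]
    [CompleteSpace Y] {T : Y →L[ℂ] Y} (h : IsUnitaryOp T) : Function.Surjective T := by
  intro y
  refine ⟨adjoint T y, ?_⟩
  exact congrArg (fun F : Y →L[ℂ] Y => F y) h.1

/-- A bilateral shift with a wandering vector. -/
theorem exists_shift : ∃ (S : lp (fun _ : ℤ => ℂ) 2 ≃ₗᵢ[ℂ] lp (fun _ : ℤ => ℂ) 2)
    (s : lp (fun _ : ℤ => ℂ) 2), ‖s‖ = 1 ∧ ∀ n : ℕ, inner ℂ s ((S^[n+1]) s) = 0 := by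
  let b : HilbertBasis ℤ ℂ (lp (fun _ : ℤ => ℂ) 2) := ⟨LinearIsometryEquiv.refl ℂ _⟩
  have ho : Orthonormal ℂ (fun j : ℤ => b (j+1)) :=
    b.orthonormal.comp _ (add_left_injective 1)
  have hr : Set.range (fun j : ℤ => b (j+1)) = Set.range b :=
    (Equiv.addRight (1:ℤ)).surjective.range_comp b
  let b' : HilbertBasis ℤ ℂ (lp (fun _ : ℤ => ℂ) 2) := HilbertBasis.mk ho (by
    rw [hr, b.dense_span])
  have hS : ∀ j, (b.repr.trans b'.repr.symm) (b j) = b (j+1) := by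
    intro j
    rw [LinearIsometryEquiv.trans_apply, b.repr_self, b'.repr_symm_single]
    simp [b']
  refine ⟨b.repr.trans b'.repr.symm, b 0, b.orthonormal.1 0, fun n => ?_⟩
  have : ∀ n : ℕ, ((b.repr.trans b'.repr.symm)^[n]) (b 0) = b n := by
    intro n
    induction n with
    | zero => rfl
    | succ k ih => rw [Function.iterate_succ_apply', ih, hS]; push_cast; rfl
  rw [this]
  exact b.orthonormal.2 (by push_cast; omega)

theorem pencil_two {n : ℕ} {Y : Type*} [NormedAddCommGroup Y] [InnerProductSpace ℂ Y]
    (B0 B1 : Y →L[ℂ] Y) (z : Fin (n+2) → ℂ) :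
    ∑ k, z k • (Fin.cons B0 (Fin.cons B1 (fun _ => 0)) : Fin (n+2) → Y →L[ℂ] Y) k
      = z 0 • B0 + z 1 • B1 := by
  simp [Fin.sum_univ_succ]

abbrev E3 := EuclideanSpace ℂ (Fin 3)

/-- the constant `1/√2` -/
def rr : ℂ := ((Real.sqrt 2)⁻¹ : ℝ)

theorem rr_sq : rr * rr = 1/2 := by
  unfold rr
  rw [← Complex.ofReal_mul, ← mul_inv, Real.mul_self_sqrt (by norm_num)]
  norm_num

theorem rr_norm : ‖rr‖ ^ 2 = 1/2 := by
  rw [sq, ← norm_mul, rr_sq]; norm_num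

def M0 : E3 →L[ℂ] E3 :=
  rr • ((EuclideanSpace.proj (1 : Fin 3)).smulRight (EuclideanSpace.single (0 : Fin 3) (1:ℂ))
    + (EuclideanSpace.proj (2 : Fin 3)).smulRight (EuclideanSpace.single (1 : Fin 3) (1:ℂ)))

def M1 : E3 →L[ℂ] E3 :=
  rr • ((EuclideanSpace.proj (0 : Fin 3)).smulRight (EuclideanSpace.single (1 : Fin 3) (1:ℂ))
    - (EuclideanSpace.proj (1 : Fin 3)).smulRight (EuclideanSpace.single (2 : Fin 3) (1:ℂ)))

theorem pencil_apply (a b : ℂ) (x : E3) : (a • M0 + b • M1) x =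
    !₂[rr * (a * x 1), rr * (b * x 0 + a * x 2), - (rr * (b * x 1))] := by
  ext i
  fin_cases i <;> simp [M0, M1] <;> ring

theorem pencil_cube (a b : ℂ) : (a • M0 + b • M1) ^ 3 = 0 := by
  ext x i
  simp only [pow_succ, pow_zero, one_mul, mul_apply_eq_comp, pencil_apply]
  fin_cases i <;> simp <;> ring_nf <;> simp

/-- The space of the unitary dilation of the pencil. -/
abbrev Y0 (H : Type) [NormedAddCommGroup H] [InnerProductSpace ℂ H] := WithLp 2 (E3 × H)

section dilation
variable {H : Type} [NormedAddCommGroup H] [InnerProductSpace ℂ H]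

def conjL (f : E3 × H →L[ℂ] E3 × H) : Y0 H →L[ℂ] Y0 H :=
  ((WithLp.prodContinuousLinearEquiv 2 ℂ E3 H).symm : E3 × H →L[ℂ] Y0 H) ∘L
    (f ∘L (WithLp.prodContinuousLinearEquiv 2 ℂ E3 H : Y0 H →L[ℂ] E3 × H))

def B0 (S : H ≃ₗᵢ[ℂ] H) (s : H) : Y0 H →L[ℂ] Y0 H :=
  conjL (ContinuousLinearMap.prod
    (M0 ∘L ContinuousLinearMap.fst ℂ E3 H +
      (rr • (innerSL ℂ s ∘L ContinuousLinearMap.snd ℂ E3 H)).smulRight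
        (EuclideanSpace.single (0 : Fin 3) (1:ℂ)))
    ((S : H →L[ℂ] H) ∘L (ContinuousLinearMap.snd ℂ E3 H
        - (innerSL ℂ s ∘L ContinuousLinearMap.snd ℂ E3 H).smulRight s) -
      (rr • (EuclideanSpace.proj (2 : Fin 3) ∘L ContinuousLinearMap.fst ℂ E3 H)).smulRight (S s)))

def B1 (S : H ≃ₗᵢ[ℂ] H) (s : H) : Y0 H →L[ℂ] Y0 H :=
  conjL (ContinuousLinearMap.prod
    (M1 ∘L ContinuousLinearMap.fst ℂ E3 H +
      (rr • (innerSL ℂ s ∘L ContinuousLinearMap.snd ℂ E3 H)).smulRight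
        (EuclideanSpace.single (2 : Fin 3) (1:ℂ)))
    ((rr • (EuclideanSpace.proj (0 : Fin 3) ∘L ContinuousLinearMap.fst ℂ E3 H)).smulRight (S s)))

theorem B_apply (S : H ≃ₗᵢ[ℂ] H) (s : H) (a b : ℂ) (x : E3) (h : H) :
    (a • B0 S s + b • B1 S s) (WithLp.toLp 2 (x, h)) = WithLp.toLp 2
      ((a • M0 + b • M1) x + !₂[rr * (a * inner ℂ s h), 0, rr * (b * inner ℂ s h)],
        a • S (h - inner ℂ s h • s) + (rr * (b * x 0 - a * x 2)) • S s) := by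
  apply (WithLp.prodContinuousLinearEquiv 2 ℂ E3 H).injective
  refine Prod.ext ?_ ?_
  · ext i
    fin_cases i <;> simp [B0, B1, conjL] <;> ring
  · simp [B0, B1, conjL]
    module

theorem B_norm (S : H ≃ₗᵢ[ℂ] H) (s : H) (hs : ‖s‖ = 1) (a b : ℂ) (ha : ‖a‖ = 1) (hb : ‖b‖ = 1)
    (y : Y0 H) : ‖(a • B0 S s + b • B1 S s) y‖ = ‖y‖ := by
  obtain ⟨⟨x, h⟩⟩ := y
  rw [B_apply, ← sq_eq_sq₀ (norm_nonneg _) (norm_nonneg _), WithLp.prod_norm_sq_eq_of_L2,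
    WithLp.prod_norm_sq_eq_of_L2, pencil_apply]
  simp only [WithLp.toLp_fst, WithLp.toLp_snd]
  set φ : ℂ := inner ℂ s h with hφ
  set h' : H := h - φ • s with hh'
  have hss : inner ℂ s s = (1:ℂ) := by rw [inner_self_eq_norm_sq_to_K, hs]; norm_num
  have hort : inner ℂ s h' = (0:ℂ) := by
    rw [hh', inner_sub_right, inner_smul_right, hss, ← hφ]; ring
  have hort' : inner ℂ h' s = (0:ℂ) := by rw [← inner_conj_symm, hort]; simp
  have hh : ‖h‖^2 = ‖h'‖^2 + ‖φ‖^2 := by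
    have e : h = h' + φ • s := by rw [hh']; abel
    have := norm_add_sq_eq_norm_sq_add_norm_sq_of_inner_eq_zero (𝕜 := ℂ) h' (φ • s)
      (by rw [inner_smul_right, hort', mul_zero])
    rw [← e, norm_smul, hs] at this
    nlinarith
  have h2 : ∀ c : ℂ, ‖a • S h' + c • S s‖^2 = ‖h'‖^2 + ‖c‖^2 := by
    intro c
    have := norm_add_sq_eq_norm_sq_add_norm_sq_of_inner_eq_zero (𝕜 := ℂ) (a • S h') (c • S s)
      (by rw [inner_smul_right, inner_smul_left, LinearIsometryEquiv.inner_map_map, hort']; simp)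
    rw [norm_smul, norm_smul, S.norm_map, S.norm_map, ha, hs] at this
    nlinarith
  rw [h2, hh, EuclideanSpace.norm_sq_eq, EuclideanSpace.norm_sq_eq]
  simp only [Fin.sum_univ_three, PiLp.add_apply]
  have p1 := parallelogram_law_with_norm ℂ (b * x 0) (a * x 2)
  have p2 := parallelogram_law_with_norm ℂ φ (x 1)
  have e1 : ‖rr * (a * x 1) + rr * (a * φ)‖^2 = 1/2 * ‖φ + x 1‖^2 := by
    rw [← rr_norm, ← mul_pow, ← norm_mul, ← mul_add, ← mul_add, norm_mul, norm_mul, norm_mul, ha,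
      add_comm]; ring
  have e2 : ‖-(rr * (b * x 1)) + rr * (b * φ)‖^2 = 1/2 * ‖φ - x 1‖^2 := by
    rw [← rr_norm, ← mul_pow, ← norm_mul,
      show -(rr * (b * x 1)) + rr * (b * φ) = rr * (b * (φ - x 1)) by ring,
      norm_mul, norm_mul, norm_mul, hb]; ring
  simp only [Matrix.cons_val_zero, Matrix.cons_val_one, Matrix.cons_val, add_zero, e1, e2]
  rw [norm_mul, norm_mul, mul_pow, mul_pow, rr_norm]
  rw [norm_mul, norm_mul, ha, hb] at p1
  nlinarith

theorem B_surj (S : H ≃ₗᵢ[ℂ] H) (s : H) (hs : ‖s‖ = 1) (a b : ℂ) (ha : ‖a‖ = 1) (hb : ‖b‖ = 1) :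
    Function.Surjective (a • B0 S s + b • B1 S s) := by
  rintro ⟨⟨y, k⟩⟩
  obtain ⟨a', haa⟩ : ∃ a' : ℂ, a * a' = 1 :=
    ⟨a⁻¹, mul_inv_cancel₀ (by intro h; rw [h, norm_zero] at ha; exact zero_ne_one ha)⟩
  obtain ⟨b', hbb⟩ : ∃ b' : ℂ, b * b' = 1 :=
    ⟨b⁻¹, mul_inv_cancel₀ (by intro h; rw [h, norm_zero] at hb; exact zero_ne_one hb)⟩
  have hss : inner ℂ s s = (1:ℂ) := by rw [inner_self_eq_norm_sq_to_K, hs]; norm_num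
  set k' := S.symm k with hk'
  have hk : k = S k' := by simp [hk']
  set κ : ℂ := inner ℂ s k' with hκ
  set φ : ℂ := rr * (a' * y 0 + b' * y 2) with hφ
  refine ⟨WithLp.toLp 2 (!₂[b' * rr * (y 1 + κ), rr * (a' * y 0 - b' * y 2),
    a' * rr * (y 1 - κ)], a' • (k' - κ • s) + φ • s), ?_⟩
  have hin : inner ℂ s (a' • (k' - κ • s) + φ • s) = φ := by
    rw [inner_add_right, inner_smul_right, inner_smul_right, inner_sub_right, inner_smul_right,
      hss, ← hκ]; ring
  rw [B_apply, hin, pencil_apply]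
  have hr := rr_sq
  congr 2
  · ext i
    fin_cases i
    · simp
      linear_combination (2 * rr * rr * y 0) * haa + 2 * y 0 * hr
    · simp
      linear_combination (rr * rr * (y 1 + κ)) * hbb + (rr * rr * (y 1 - κ)) * haa + 2 * y 1 * hr
    · simp
      linear_combination (2 * rr * rr * y 2) * hbb + 2 * y 2 * hr
  · have : rr * (b * (b' * rr * (y 1 + κ)) - a * (a' * rr * (y 1 - κ))) = κ := by
      linear_combination (rr * rr * (y 1 + κ)) * hbb - (rr * rr * (y 1 - κ)) * haa + 2 * κ * hr
    rw [add_sub_cancel_right]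
    simp only [Matrix.cons_val_zero, Matrix.cons_val]
    rw [this, map_smul, smul_smul, haa, one_smul, map_sub, map_smul, sub_add_cancel, hk]

theorem B_pow (S : H ≃ₗᵢ[ℂ] H) (s : H) (hs : ∀ n : ℕ, inner ℂ s ((S^[n+1]) s) = (0:ℂ))
    (a b : ℂ) (x : E3) (n : ℕ) : ∃ h : H, (∀ m : ℕ, inner ℂ s ((S^[m]) h) = (0:ℂ)) ∧
      ((a • B0 S s + b • B1 S s) ^ n) (WithLp.toLp 2 (x, 0)) =
        WithLp.toLp 2 (((a • M0 + b • M1) ^ n) x, h) := by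
  induction n with
  | zero =>
    refine ⟨0, fun m => ?_, rfl⟩
    have : (S^[m]) (0:H) = 0 := by
      induction m with
      | zero => rfl
      | succ k ih => rw [Function.iterate_succ_apply', ih, map_zero]
    rw [this, inner_zero_right]
  | succ n ih =>
    obtain ⟨h, h1, h2⟩ := ih
    have h0 := h1 0
    simp only [Function.iterate_zero, id] at h0
    rw [pow_succ', pow_succ', mul_apply_eq_comp, h2, B_apply, h0]
    refine ⟨a • S (h - (0:ℂ) • s) + (rr * (b * (((a • M0 + b • M1) ^ n) x) 0 -
      a * (((a • M0 + b • M1) ^ n) x) 2)) • S s, ?_, ?_⟩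
    rotate_left
    · rw [mul_apply_eq_comp]
      congr 2
      rw [add_eq_left]
      ext i; fin_cases i <;> simp
    · intro m
      have : ∀ (m : ℕ) (c d : ℂ) (u v : H), (S^[m]) (c • u + d • v) = c • (S^[m]) u + d • (S^[m]) v := by
        intro m c d u v
        induction m with
        | zero => rfl
        | succ k ih => simp only [Function.iterate_succ_apply', ih, map_add, map_smul]
      rw [this, zero_smul, sub_zero, ← Function.iterate_succ_apply, ← Function.iterate_succ_apply,
        inner_add_right, inner_smul_right, inner_smul_right, h1, hs]
      simp

end dilation

section doubling
variable {Z : Type} [NormedAddCommGroup Z] [InnerProductSpace ℂ Z]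

/-- The operator `T ⊕ (-T)`. -/
def dg (T : Z →L[ℂ] Z) : WithLp 2 (Z × Z) →L[ℂ] WithLp 2 (Z × Z) :=
  ((WithLp.prodContinuousLinearEquiv 2 ℂ Z Z).symm : Z × Z →L[ℂ] WithLp 2 (Z × Z)) ∘L
    ((T.prodMap (-T)) ∘L
      (WithLp.prodContinuousLinearEquiv 2 ℂ Z Z : WithLp 2 (Z × Z) →L[ℂ] Z × Z))

theorem dg_apply (T : Z →L[ℂ] Z) (u v : Z) :
    dg T (WithLp.toLp 2 (u, v)) = WithLp.toLp 2 (T u, -(T v)) := by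
  simp [dg]

theorem dg_comb (a b : ℂ) (T R : Z →L[ℂ] Z) : a • dg T + b • dg R = dg (a • T + b • R) := by
  ext y
  obtain ⟨⟨u, v⟩⟩ := y
  simp only [add_apply, smul_apply, dg_apply,
    ← WithLp.toLp_smul, ← WithLp.toLp_add, Prod.smul_mk, Prod.mk_add_mk]
  congr 2
  simp only [smul_neg]
  abel

theorem dg_pow (T : Z →L[ℂ] Z) (n : ℕ) (u v : Z) :
    (dg T ^ n) (WithLp.toLp 2 (u, v)) =
      WithLp.toLp 2 ((T ^ n) u, ((-1 : ℂ) ^ n) • (T ^ n) v) := by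
  induction n with
  | zero => simp
  | succ n ih =>
    rw [pow_succ', mul_apply_eq_comp, ih, dg_apply, pow_succ' T, mul_apply_eq_comp,
      mul_apply_eq_comp, map_smul, pow_succ]
    simp

variable [CompleteSpace Z]

theorem dg_unitary (T : Z →L[ℂ] Z) (hT : ∀ y, ‖T y‖ = ‖y‖) (hs : Function.Surjective T) :
    IsUnitaryOp (dg T) := by
  apply isUnitaryOp_of_norm_surj
  · rintro ⟨⟨u, v⟩⟩
    rw [dg_apply, ← sq_eq_sq₀ (norm_nonneg _) (norm_nonneg _), WithLp.prod_norm_sq_eq_of_L2,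
      WithLp.prod_norm_sq_eq_of_L2]
    simp [hT]
  · rintro ⟨⟨u, v⟩⟩
    obtain ⟨u', rfl⟩ := hs u
    obtain ⟨v', hv⟩ := hs (-v)
    exact ⟨WithLp.toLp 2 (u', v'), by rw [dg_apply, hv, neg_neg]⟩

end doubling

section emb
variable {H : Type} [NormedAddCommGroup H] [InnerProductSpace ℂ H]

/-- the embedding of the space -/
def emb (H : Type) [NormedAddCommGroup H] [InnerProductSpace ℂ H] (α β : ℂ) :
    E3 →L[ℂ] WithLp 2 (Y0 H × Y0 H) :=
  ((WithLp.prodContinuousLinearEquiv 2 ℂ (Y0 H) (Y0 H)).symm :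
      Y0 H × Y0 H →L[ℂ] WithLp 2 (Y0 H × Y0 H)) ∘L
    ((α • (((WithLp.prodContinuousLinearEquiv 2 ℂ E3 H).symm : E3 × H →L[ℂ] Y0 H) ∘L
        ContinuousLinearMap.inl ℂ E3 H)).prod
     (β • (((WithLp.prodContinuousLinearEquiv 2 ℂ E3 H).symm : E3 × H →L[ℂ] Y0 H) ∘L
        ContinuousLinearMap.inl ℂ E3 H)))

theorem emb_apply (α β : ℂ) (x : E3) : emb H α β x =
    WithLp.toLp 2 (α • WithLp.toLp 2 (x, (0:H)), β • WithLp.toLp 2 (x, (0:H))) := by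
  simp [emb]

end emb

theorem memC_A (ρ : ℝ) (hρ : 1 < ρ) (n : ℕ) :
    MemC (n+2) ρ (Fin.cons ((Real.sqrt ρ : ℂ) • M0) (Fin.cons ((Real.sqrt ρ : ℂ) • M1)
      (fun _ => 0)) : Fin (n+2) → E3 →L[ℂ] E3) := by
  obtain ⟨S, s, hs, hsn⟩ := exists_shift
  have h1 : 1 < Real.sqrt ρ := by rw [Real.lt_sqrt (by norm_num)]; simpa using hρ
  have hsq : Real.sqrt ρ * Real.sqrt ρ = ρ := Real.mul_self_sqrt (by linarith)
  set g := Real.sqrt ρ with hg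
  have hg0 : 0 < g := by linarith
  have hc : g⁻¹ < 1 := inv_lt_one_of_one_lt₀ h1
  have hc0 : 0 < g⁻¹ := by positivity
  set α := Real.sqrt ((1 + g⁻¹)/2)
  set β := Real.sqrt ((1 - g⁻¹)/2)
  have hα : α * α = (1 + g⁻¹)/2 := Real.mul_self_sqrt (by linarith)
  have hβ : β * β = (1 - g⁻¹)/2 := Real.mul_self_sqrt (by linarith)
  refine ⟨{ Y := WithLp 2 (Y0 (lp (fun _ : ℤ => ℂ) 2) × Y0 (lp (fun _ : ℤ => ℂ) 2))
            ι := emb _ (α : ℂ) (β : ℂ)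
            isom := ?_
            At := Fin.cons (dg (B0 S s)) (Fin.cons (dg (B1 S s)) (fun _ => 0))
            unit := ?_
            dil := ?_ }⟩
  · rw [AddMonoidHomClass.isometry_iff_norm]
    intro x
    rw [emb_apply, ← sq_eq_sq₀ (norm_nonneg _) (norm_nonneg _), WithLp.prod_norm_sq_eq_of_L2]
    simp only [WithLp.toLp_fst, WithLp.toLp_snd, norm_smul, mul_pow, WithLp.prod_norm_sq_eq_of_L2,
      Complex.norm_real, Real.norm_eq_abs, sq_abs, norm_zero]
    rw [sq α, sq β, hα, hβ]; ring
  · intro ζ hζ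
    rw [pencil_two, dg_comb]
    exact dg_unitary _ (B_norm S s hs _ _ (hζ 0) (hζ 1)) (B_surj S s hs _ _ (hζ 0) (hζ 1))
  · intro z m hm
    rw [pencil_two, pencil_two, dg_comb, smul_comm, smul_comm (z 1), ← smul_add, smul_pow]
    ext1 x
    refine ext_inner_left ℂ fun w => ?_
    simp only [smul_apply, ContinuousLinearMap.comp_apply]
    rw [inner_smul_right, inner_smul_right, adjoint_inner_right, emb_apply, emb_apply, dg_pow]
    obtain ⟨h, -, hB⟩ := B_pow S s hsn (z 0) (z 1) x m
    rw [map_smul, map_smul, hB]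
    simp only [WithLp.prod_inner_apply, WithLp.toLp_fst, WithLp.toLp_snd, inner_smul_left,
      inner_smul_right, inner_zero_left, add_zero, Complex.conj_ofReal]
    have hα' : (α:ℂ) * α = (1 + (g:ℂ)⁻¹)/2 := by exact_mod_cast congrArg Complex.ofReal hα
    have hβ' : (β:ℂ) * β = (1 - (g:ℂ)⁻¹)/2 := by exact_mod_cast congrArg Complex.ofReal hβ
    have hρ' : (ρ : ℂ) = g * g := by exact_mod_cast congrArg Complex.ofReal hsq.symm
    have hgi : (g:ℂ) * (g:ℂ)⁻¹ = 1 := mul_inv_cancel₀ (by exact_mod_cast hg0.ne')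
    obtain rfl | rfl | hm3 : m = 1 ∨ m = 2 ∨ 3 ≤ m := by omega
    · rw [hρ']
      set I := inner ℂ w (((z 0 • M0 + z 1 • M1) ^ 1) x)
      linear_combination (-g * g * I) * hα' + (g * g * I) * hβ' - g * I * hgi
    · rw [hρ']
      set I := inner ℂ w (((z 0 • M0 + z 1 • M1) ^ 2) x)
      linear_combination (-g * g * I) * hα' - (g * g * I) * hβ'
    · rw [pow_eq_zero_of_le hm3 (pencil_cube _ _)]
      simp

theorem contraction_of_memC {n : ℕ} {Y : Type} [NormedAddCommGroup Y] [InnerProductSpace ℂ Y]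
    [CompleteSpace Y] (T : Fin (n+2) → Y →L[ℂ] Y) (hT : MemC (n+2) 1 T) (y1 y2 : Y) :
    ‖T 1 y1 + T 0 y2‖^2 + ‖T 0 y1 - T 1 y2‖^2 ≤ ‖y1‖^2 + ‖y2‖^2 := by
  obtain ⟨⟨K, ι, isom, At, unit, dil⟩⟩ := hT
  have hι : ∀ y, ‖ι y‖ = ‖y‖ := (AddMonoidHomClass.isometry_iff_norm ι).1 isom
  have hιa : ∀ k, ‖adjoint ι k‖ ≤ ‖k‖ := by
    intro k
    have h1 : ‖adjoint ι‖ ≤ 1 := by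
      rw [LinearIsometryEquiv.norm_map]
      exact ContinuousLinearMap.opNorm_le_bound _ zero_le_one (fun y => by rw [hι, one_mul])
    simpa using (adjoint ι).le_of_opNorm_le h1 k
  have hTk : ∀ k y, T k y = adjoint ι (At k (ι y)) := by
    intro k y
    have := dil (Pi.single k 1) 1 le_rfl
    simp only [Pi.single_apply, ite_smul, one_smul, zero_smul, Finset.sum_ite_eq',
      Finset.mem_univ, if_true, pow_one, Complex.ofReal_one] at this
    rw [this]; rfl
  set R : K →L[ℂ] K := ∑ i : Fin n, At i.succ.succ with hR
  have hu : ∀ a b : ℂ, ‖a‖ = 1 → ‖b‖ = 1 → IsUnitaryOp (a • At 0 + b • At 1 + R) := by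
    intro a b ha hb
    have := unit (Fin.cons a (Fin.cons b (fun _ => 1))) (by
      intro k
      refine Fin.cases ha (fun k => ?_) k
      refine Fin.cases hb (fun k => ?_) k
      simp)
    simp only [Fin.sum_univ_succ, Fin.cons_zero, Fin.cons_succ, one_smul] at this
    rw [hR, add_assoc]
    exact this
  have hin : ∀ a b : ℂ, ‖a‖ = 1 → ‖b‖ = 1 → ∀ u v : K,
      inner ℂ (a • At 0 u + b • At 1 u + R u) (a • At 0 v + b • At 1 v + R v)
        = (inner ℂ u v : ℂ) := fun a b ha hb u v => (hu a b ha hb).inner_map u v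
  have e1 : ‖(1:ℂ)‖ = 1 := by simp
  have e2 : ‖(-1:ℂ)‖ = 1 := by simp
  have e3 : ‖Complex.I‖ = 1 := by simp
  have e4 : ‖-Complex.I‖ = 1 := by simp
  have horth : ∀ u v : K, inner ℂ (At 0 u) (At 1 v) = (0:ℂ) := by
    intro u v
    have a1 := hin 1 1 e1 e1 u v
    have a2 := hin 1 (-1) e1 e2 u v
    have a3 := hin (-1) 1 e2 e1 u v
    have a4 := hin (-1) (-1) e2 e2 u v
    have b1 := hin Complex.I 1 e3 e1 u v
    have b2 := hin Complex.I (-1) e3 e2 u v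
    have b3 := hin (-Complex.I) 1 e4 e1 u v
    have b4 := hin (-Complex.I) (-1) e4 e2 u v
    simp only [inner_add_left, inner_add_right, inner_smul_left, inner_smul_right, map_one,
      map_neg, Complex.conj_I] at a1 a2 a3 a4 b1 b2 b3 b4
    linear_combination (a1 - a2 - a3 + a4) / 8 + Complex.I * (b1 - b2 - b3 + b4) / 8
      + (inner ℂ (At 0 u) (At 1 v) - inner ℂ (At 1 u) (At 0 v)) / 2 * Complex.I_sq
  have hnorm : ∀ u : K, ‖At 0 u‖^2 + ‖At 1 u‖^2 ≤ ‖u‖^2 := by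
    intro u
    have a1 := (hu 1 1 e1 e1).norm_map u
    have a2 := (hu 1 (-1) e1 e2).norm_map u
    have a3 := (hu (-1) 1 e2 e1).norm_map u
    have a4 := (hu (-1) (-1) e2 e2).norm_map u
    simp only [add_apply, smul_apply, one_smul,
      neg_apply, neg_smul] at a1 a2 a3 a4
    have p1 := parallelogram_law_with_norm ℂ (At 0 u + R u) (At 1 u)
    have p2 := parallelogram_law_with_norm ℂ (-At 0 u + R u) (At 1 u)
    have p3 := parallelogram_law_with_norm ℂ (R u) (At 0 u)
    rw [show At 0 u + R u + At 1 u = At 0 u + At 1 u + R u by abel, a1,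
      show At 0 u + R u - At 1 u = At 0 u + -At 1 u + R u by abel, a2] at p1
    rw [show -At 0 u + R u + At 1 u = -At 0 u + At 1 u + R u by abel, a3,
      show -At 0 u + R u - At 1 u = -At 0 u + -At 1 u + R u by abel, a4] at p2
    rw [add_comm (R u), show R u - At 0 u = -At 0 u + R u by abel] at p3
    nlinarith [sq_nonneg ‖R u‖]
  have q1 : ‖T 1 y1 + T 0 y2‖^2 ≤ ‖At 1 (ι y1)‖^2 + ‖At 0 (ι y2)‖^2 := by
    rw [hTk, hTk, ← map_add]
    have := norm_add_sq_eq_norm_sq_add_norm_sq_of_inner_eq_zero (𝕜 := ℂ)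
      (At 0 (ι y2)) (At 1 (ι y1)) (horth _ _)
    have h2 := hιa (At 1 (ι y1) + At 0 (ι y2))
    rw [add_comm] at this
    nlinarith [norm_nonneg (adjoint ι (At 1 (ι y1) + At 0 (ι y2)))]
  have q2 : ‖T 0 y1 - T 1 y2‖^2 ≤ ‖At 0 (ι y1)‖^2 + ‖At 1 (ι y2)‖^2 := by
    rw [hTk, hTk, ← map_sub]
    have := norm_add_sq_eq_norm_sq_add_norm_sq_of_inner_eq_zero (𝕜 := ℂ)
      (At 0 (ι y1)) (-At 1 (ι y2)) (by rw [inner_neg_right, horth, neg_zero])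
    have h2 := hιa (At 0 (ι y1) - At 1 (ι y2))
    rw [← sub_eq_add_neg, norm_neg] at this
    nlinarith [norm_nonneg (adjoint ι (At 0 (ι y1) - At 1 (ι y2)))]
  have q3 := hnorm (ι y1)
  have q4 := hnorm (ι y2)
  rw [hι] at q3 q4
  linarith

/-- for every `ρ > 1` and `N > 1` there is a complex Hilbert space `X` and an
`N`-tuple `A ∈ C_{ρ,N}` on `X` not simultaneously similar to any `T ∈ C_{1,N}`. -/
theorem exists_memC_not_similar (ρ : ℝ) (hρ : 1 < ρ) (N : ℕ) (hN : 1 < N) :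
    Nonempty (NonSimilarWitness N ρ) := by
  obtain ⟨n, rfl⟩ : ∃ n, N = n + 2 := ⟨N - 2, by omega⟩
  refine ⟨{ X := E3, A := _, mem := memC_A ρ hρ n, notSimilar := ?_ }⟩
  intro Y _ _ _ T hT S hS
  have h1 : 1 < Real.sqrt ρ := by rw [Real.lt_sqrt (by norm_num)]; simpa using hρ
  set g := Real.sqrt ρ with hg
  have hA : ∀ k x, T k (S x) = S ((Fin.cons ((g : ℂ) • M0) (Fin.cons ((g : ℂ) • M1)
      (fun _ => 0)) : Fin (n+2) → E3 →L[ℂ] E3) k x) := by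
    intro k x
    rw [hS k]; simp
  have hA0 : ∀ x, T 0 (S x) = S ((g : ℂ) • M0 x) := fun x => hA 0 x
  have hA1 : ∀ x, T 1 (S x) = S ((g : ℂ) • M1 x) := fun x => hA 1 x
  let e0 : E3 := EuclideanSpace.single 0 1
  let e1 : E3 := EuclideanSpace.single 1 1
  let e2 : E3 := EuclideanSpace.single 2 1
  have m00 : M0 e0 = 0 := by ext i; fin_cases i <;> simp [M0, e0]
  have m01 : M0 e1 = rr • e0 := by ext i; fin_cases i <;> simp [M0, e0, e1]
  have m02 : M0 e2 = rr • e1 := by ext i; fin_cases i <;> simp [M0, e1, e2]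
  have m10 : M1 e0 = rr • e1 := by ext i; fin_cases i <;> simp [M1, e0, e1]
  have m11 : M1 e1 = -(rr • e2) := by ext i; fin_cases i <;> simp [M1, e2, e1]
  have m12 : M1 e2 = 0 := by ext i; fin_cases i <;> simp [M1, e2]
  have c1 := contraction_of_memC T hT (S e1) 0
  have c2 := contraction_of_memC T hT (T 1 (S e1)) (T 0 (S e1))
  have k1 : T 1 (T 1 (S e1)) + T 0 (T 0 (S e1)) = 0 := by
    simp only [hA1, hA0, map_smul, m11, m01, map_neg, m12, m00]
    simp
  have k2 : T 0 (T 1 (S e1)) - T 1 (T 0 (S e1)) = -((g:ℂ)^2 • S e1) := by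
    simp only [hA1, hA0, map_smul, m11, m01, map_neg, m02, m10, smul_neg, smul_smul, ← neg_add',
      ← add_smul]
    congr 2
    linear_combination 2 * (g:ℂ)^2 * rr_sq
  rw [k1, k2, norm_neg, norm_smul, norm_zero] at c2
  simp only [map_zero, add_zero, sub_zero, norm_zero] at c1
  have hpos : 0 < ‖S e1‖ := by
    rw [norm_pos_iff]
    intro h
    have h' : e1 = 0 := by simpa using h
    have := congrArg (fun v : E3 => v 1) h'
    simp [e1] at this
  have hn : ‖(g:ℂ)^2‖ = g^2 := by
    rw [norm_pow, Complex.norm_real, Real.norm_eq_abs, sq_abs]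
  rw [hn] at c2
  have hg2 : 1 < g^2 := by nlinarith
  have : ‖S e1‖ < g^2 * ‖S e1‖ := by nlinarith
  nlinarith
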